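/- For natural numbers a, b, c, the number of order ideals (lower sets) of the product of three chains Fin a × Fin b × Fin c (with the componentwise order) satisfies (number of lower sets of Fin a × Fin b × Fin c) · ∏_{i=0}^{a-1} ∏_{j=0}^{b-1} ∏_{k=0}^{c-1} (i+j+k+1) = ∏_{i=0}^{a-1} ∏_{j=0}^{b-1} ∏_{k=0}^{c-1} (i+j+k+2). -/

import Mathlib

open Finset

/-- Gelfand-Tsetlin patterns: fillings of the triangle `q + i < n`, antitone in `q`,
monotone in `i`, with prescribed longest antidiagonal `x`. -/
def IsGT (n : ℕ) (x : Fin n → ℕ) (T : ℕ → ℕ → ℕ) : Prop :=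
  (∀ q i, n ≤ q + i → T q i = 0) ∧
  (∀ q (i : Fin n), q + i + 1 = n → T q i = x i) ∧
  (∀ q i, q + i + 1 < n → T (q + 1) i ≤ T q i ∧ T q i ≤ T q (i + 1))

/-- Vectors interlacing with `x`. -/
def interl {n : ℕ} (x : Fin (n + 1) → ℕ) : Finset (Fin n → ℕ) :=
  Fintype.piFinset fun i => Finset.Icc (x i.castSucc) (x i.succ)

/-- Peeling off the longest antidiagonal. -/
def gtEquiv (n : ℕ) (x : Fin (n + 1) → ℕ) :
    {T // IsGT (n + 1) x T} ≃ Σ y : interl x, {T // IsGT n y.1 T} where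
  toFun T := ⟨⟨fun i => T.1 (n - 1 - i) i, by
      obtain ⟨T, h1, h2, h3⟩ := T
      simp only [interl, Fintype.mem_piFinset, Finset.mem_Icc]
      intro i
      have hi := i.2
      have := h3 (n - 1 - i) i (by omega)
      rw [← h2 (n - 1 - i + 1) i.castSucc (by simp; omega),
        ← h2 (n - 1 - i) i.succ (by simp; omega)]
      simpa using this⟩,
    ⟨fun q i => if q + i = n then 0 else T.1 q i, by
      obtain ⟨T, h1, h2, h3⟩ := T
      refine ⟨?_, ?_, ?_⟩
      · intro q i h
        by_cases h' : q + i = n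
        · simp [h']
        · simp only [h', if_false]; exact h1 q i (by omega)
      · intro q i h
        have : q = n - 1 - i := by omega
        subst this
        simp only
        rw [if_neg (by omega)]
      · intro q i h
        simp only
        rw [if_neg (by omega), if_neg (by omega), if_neg (by omega)]
        exact h3 q i (by omega)⟩⟩
  invFun p := ⟨fun q i => if h : q + i = n then x ⟨i, by omega⟩ else p.2.1 q i, by
      obtain ⟨⟨y, hy⟩, T, h1, h2, h3⟩ := p
      simp only [interl, Fintype.mem_piFinset, Finset.mem_Icc] at hy
      refine ⟨?_, ?_, ?_⟩
      · intro q i h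
        simp only
        rw [dif_neg (by omega)]
        exact h1 q i (by omega)
      · intro q i h
        simp only
        rw [dif_pos (by omega)]
      · intro q i h
        simp only
        rw [dif_neg (show ¬ q + i = n by omega)]
        by_cases h' : q + i + 1 = n
        · rw [dif_pos (by omega), dif_pos (by omega)]
          have h4 := h2 q ⟨i, by omega⟩ h'
          simp only at h4
          rw [h4]
          exact hy ⟨i, by omega⟩
        · rw [dif_neg (by omega), dif_neg (by omega)]
          exact h3 q i (by omega)⟩
  left_inv := by
    rintro ⟨T, h1, h2, h3⟩
    ext q i
    simp only
    split_ifs with h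
    · exact (h2 q ⟨i, by omega⟩ (by simp; omega)).symm
    · rfl
  right_inv := by
    rintro ⟨⟨y, hy⟩, T, h1, h2, h3⟩
    have key : ∀ (p p' : Σ y : interl x, {T // IsGT n y.1 T}), p.1.1 = p'.1.1 →
        p.2.1 = p'.2.1 → p = p' := by
      rintro ⟨⟨y, hy⟩, T, hT⟩ ⟨⟨y', hy'⟩, T', hT'⟩ h h'
      simp only at h h'
      subst h
      subst h'
      rfl
    apply key
    · funext i
      have hi := i.2
      simp only
      rw [dif_neg (by omega)]
      exact h2 _ i (by omega)
    · funext q i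
      simp only
      split_ifs with h
      · exact (h1 q i (by omega)).symm
      · rfl

/-- The binomial determinant. -/
def bdet (n : ℕ) (v : Fin n → ℕ) : ℤ :=
  (Matrix.of fun i j : Fin n => (Nat.choose (v i) j : ℤ)).det

lemma sum_choose_Icc (l u i j : ℕ) (h : l ≤ u) :
    ∑ y ∈ Finset.Icc l u, (Nat.choose (y + i) j : ℤ) =
      Nat.choose (u + (i + 1)) (j + 1) - Nat.choose (l + i) (j + 1) := by
  induction u, h using Nat.le_induction with
  | base =>
    have := Nat.choose_succ_succ (l + i) j
    simp only [Finset.Icc_self, Finset.sum_singleton]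
    rw [← add_assoc, this]; push_cast; ring
  | succ u hu ih =>
    rw [← Finset.insert_Icc_right_eq_Icc_add_one (by omega), Finset.sum_insert (by simp), ih]
    have := Nat.choose_succ_succ (u + 1 + i) j
    rw [show u + 1 + (i + 1) = (u + 1 + i).succ by omega, this,
      show u + (i + 1) = u + 1 + i by omega]
    push_cast; ring

lemma bdet_succ (n : ℕ) (x : Fin (n + 1) → ℕ) (hx : Monotone x) :
    bdet (n + 1) (fun i => x i + i) = ∑ y ∈ interl x, bdet n (fun i => y i + i) := by
  have h1 : ∑ y ∈ interl x, bdet n (fun i => y i + i) =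
      (Matrix.of fun i j : Fin n =>
        ((Nat.choose (x i.succ + (i + 1)) (j + 1) : ℤ)
          - Nat.choose (x i.castSucc + i) (j + 1))).det := by
    have := (Matrix.detRowAlternating (n := Fin n) (R := ℤ)).toMultilinearMap.map_sum_finset
      (fun (i : Fin n) (y : ℕ) (j : Fin n) => (Nat.choose (y + i) j : ℤ))
      (fun i => Finset.Icc (x i.castSucc) (x i.succ))
    refine Eq.trans this.symm ?_
    change Matrix.det _ = _
    congr 1
    ext i j
    rw [Finset.sum_apply]
    exact sum_choose_Icc _ _ _ _ (hx (Fin.castSucc_lt_succ).le)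
  rw [h1, bdet]
  let B : Matrix (Fin (n + 1)) (Fin (n + 1)) ℤ := Matrix.of fun i j =>
    Fin.cases (motive := fun _ => ℤ) (Nat.choose (x 0 + 0) j : ℤ) (fun i' => 
      (Nat.choose (x i'.succ + (i' + 1)) j : ℤ) - Nat.choose (x i'.castSucc + i') j) i
  rw [Matrix.det_eq_of_forall_row_eq_smul_add_pred (B := B) (fun _ => 1)]
  · rw [Matrix.det_succ_column_zero, Fin.sum_univ_succ]
    simp only [B]
    simp
    rfl
  · intro j; simp [B]
  · intro i j; simp [B]

lemma card_gt (n : ℕ) : ∀ (x : Fin n → ℕ), Monotone x →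
    Finite {T // IsGT n x T} ∧ (Nat.card {T // IsGT n x T} : ℤ) = bdet n (fun i => x i + i) := by
  induction n with
  | zero =>
    intro x _
    have : Unique {T // IsGT 0 x T} :=
      { default := ⟨fun _ _ => 0, by simp [IsGT]⟩
        uniq := by
          rintro ⟨T, h1, h2, h3⟩
          ext q i
          exact h1 q i (by omega) }
    refine ⟨inferInstance, ?_⟩
    simp [bdet]
  | succ n ih =>
    intro x hx
    have hy : ∀ y ∈ interl x, Monotone y := by
      intro y hy
      simp only [interl, Fintype.mem_piFinset, Finset.mem_Icc] at hy
      intro i j hij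
      rcases hij.lt_or_eq with h | h
      · exact (hy i).2.trans ((hx (by
          rw [Fin.le_def]; simp; exact h)).trans (hy j).1)
      · rw [h]
    have hf : ∀ y : interl x, Finite {T // IsGT n y.1 T} := fun y => (ih y.1 (hy y.1 y.2)).1
    refine ⟨Finite.of_equiv _ (gtEquiv n x).symm, ?_⟩
    rw [Nat.card_congr (gtEquiv n x), Nat.card_sigma, bdet_succ n x hx,
      ← Finset.sum_coe_sort (interl x)]
    push_cast
    exact Finset.sum_congr rfl fun (y : interl x) _ => (ih y.1 (hy y.1 y.2)).2

lemma vand_eq (n : ℕ) (v : Fin n → ℕ) :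
    (Matrix.vandermonde (fun i => (v i : ℤ))).det = (∏ i : Fin n, (Nat.factorial i : ℤ)) * bdet n v := by
  rw [Matrix.det_eval_matrixOfPolynomials_eq_det_vandermonde (fun i ↦ (v i : ℤ))
      (fun i => descPochhammer ℤ i)
      (fun i => descPochhammer_natDegree ℤ i)
      (fun i => monic_descPochhammer ℤ i), bdet, ← Matrix.det_mul_row]
  congr 1
  ext i j
  simp only [Matrix.of_apply]
  rw [descPochhammer_eval_eq_descFactorial ℤ, Nat.descFactorial_eq_factorial_mul_choose]
  push_cast; rfl

lemma bdet_id (n : ℕ) : bdet n (fun i => i) = 1 := by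
  rw [bdet, Matrix.det_of_isLowerTriangular]
  · simp
  · intro i j h
    simp at h
    simp [Nat.choose_eq_zero_of_lt h]

lemma vand_mul (n : ℕ) (v : Fin n → ℕ) :
    (∏ i : Fin n, ∏ j : Fin n, if i < j then ((v j : ℤ) - v i) else 1) = 
    bdet n v * (∏ i : Fin n, ∏ j : Fin n, if i < j then ((j : ℤ) - i) else 1) := by
  have h := vand_eq n v
  have h' := vand_eq n (fun i => i)
  rw [bdet_id, mul_one] at h'
  rw [← h', Matrix.det_vandermonde, Matrix.det_vandermonde] at h
  simp only [← Finset.filter_lt_eq_Ioi, Finset.prod_filter] at h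
  rw [h, mul_comm]

lemma bdet_top (a b c : ℕ) :
    bdet (c + a) (fun i => (if (i : ℕ) < c then 0 else b) + i) *
      ∏ i ∈ range a, ∏ k ∈ range c, ((i + k + 1 : ℕ) : ℤ) =
      ∏ i ∈ range a, ∏ k ∈ range c, ((i + k + b + 1 : ℕ) : ℤ) := by
  have h := vand_mul (c + a) (fun i => (if (i : ℕ) < c then 0 else b) + i)
  have hR : ∀ b : ℕ, (∏ i : Fin c, ∏ j : Fin a, ((b : ℤ) + (c + j) - i)) =
      ∏ i ∈ range a, ∏ k ∈ range c, ((i + k + b + 1 : ℕ) : ℤ) := by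
    intro b
    rw [Finset.prod_comm, ← Fin.prod_univ_eq_prod_range (fun i => ∏ k ∈ range c, ((i + k + b + 1 : ℕ) : ℤ))]
    refine Finset.prod_congr rfl fun j _ => ?_
    rw [Fin.prod_univ_eq_prod_range (fun i => ((b : ℤ) + (c + j) - i)) c,
      ← Finset.prod_range_reflect]
    refine Finset.prod_congr rfl fun i hi => ?_
    have := Finset.mem_range.1 hi
    omega
  have hlt : ∀ (i j : Fin c), Fin.castAdd a i < Fin.castAdd a j ↔ i < j := by
    intro i j; exact Iff.rfl
  have hlt1 : ∀ (i : Fin c) (j : Fin a), Fin.castAdd a i < Fin.natAdd c j := by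
    intro i j; simp [Fin.lt_def]; omega
  have hlt2 : ∀ (i : Fin c) (j : Fin a), ¬ Fin.natAdd c j < Fin.castAdd a i := by
    intro i j; simp [Fin.lt_def]; omega
  have hlt3 : ∀ (i j : Fin a), Fin.natAdd c i < Fin.natAdd c j ↔ i < j := by
    intro i j; simp
  simp only [Fin.prod_univ_add, hlt, hlt1, hlt2, hlt3, if_true, if_false, Finset.prod_const_one,
    Fin.val_castAdd, Fin.val_natAdd, Fin.is_lt, Finset.prod_mul_distrib,
    Nat.zero_add, show ∀ j, ¬ (c + j < c) by omega] at h
  push_cast at h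
  simp only [← add_assoc, add_sub_add_left_eq_sub] at h
  have hR0 := hR 0
  have hRb := hR b
  simp only [← add_assoc, Nat.cast_zero, zero_add, add_zero] at hR0 hRb
  rw [hR0, hRb] at h
  have hne : ∀ m, (∏ i : Fin m, ∏ j : Fin m, if i < j then ((j : ℤ) - i) else 1) ≠ 0 := by
    intro m
    refine Finset.prod_ne_zero_iff.2 fun i _ => Finset.prod_ne_zero_iff.2 fun j _ => ?_
    split_ifs with h
    · rw [Fin.lt_def] at h; omega
    · simp
  apply mul_left_cancel₀ (hne c)
  apply mul_left_cancel₀ (hne a)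
  linear_combination -h

lemma tele (a b c : ℕ) :
    (∏ i ∈ range a, ∏ j ∈ range b, ∏ k ∈ range c, (i + j + k + 1)) *
      ∏ i ∈ range a, ∏ k ∈ range c, (i + k + b + 1) =
    (∏ i ∈ range a, ∏ j ∈ range b, ∏ k ∈ range c, (i + j + k + 2)) *
      ∏ i ∈ range a, ∏ k ∈ range c, (i + k + 1) := by
  simp only [← Finset.prod_mul_distrib]
  refine Finset.prod_congr rfl fun i _ => ?_
  rw [Finset.prod_comm, Finset.prod_comm (s := range b)]
  simp only [← Finset.prod_mul_distrib]
  refine Finset.prod_congr rfl fun k _ => ?_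
  induction b with
  | zero => simp
  | succ b ih =>
    rw [Finset.prod_range_succ, Finset.prod_range_succ]
    calc _ = (∏ j ∈ range b, (i + j + k + 1)) * (i + k + b + 1) * (i + b + k + 2) := by ring
      _ = _ := by rw [ih]; ring

lemma IsGT.anti {n : ℕ} {x : Fin n → ℕ} {T : ℕ → ℕ → ℕ} (h : IsGT n x T) {q q' : ℕ} (i : ℕ)
    (hq : q ≤ q') : q' + i < n → T q' i ≤ T q i := by
  induction q', hq using Nat.le_induction with
  | base => intro _; exact le_rfl
  | succ m hm ih =>
    intro hn
    exact ((h.2.2 m i (by omega)).1).trans (ih (by omega))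

lemma IsGT.mono {n : ℕ} {x : Fin n → ℕ} {T : ℕ → ℕ → ℕ} (h : IsGT n x T) (q : ℕ) {i i' : ℕ}
    (hi : i ≤ i') : q + i' < n → T q i ≤ T q i' := by
  induction i', hi using Nat.le_induction with
  | base => intro _; exact le_rfl
  | succ m hm ih =>
    intro hn
    exact (ih (by omega)).trans ((h.2.2 q m (by omega)).2)

lemma filter_down (b : ℕ) (P : ℕ → Prop) [DecidablePred P] (hb : ∀ k, P k → k < b)
    (hd : ∀ k l, k ≤ l → P l → P k) (k : ℕ) : k < #((range b).filter P) ↔ P k := by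
  constructor
  · intro h
    by_contra hk
    have : (range b).filter P ⊆ range k := by
      intro l hl
      rw [Finset.mem_filter] at hl
      rw [Finset.mem_range]
      by_contra hkl
      exact hk (hd k l (by omega) hl.2)
    have := Finset.card_le_card this
    rw [Finset.card_range] at this
    omega
  · intro h
    have : range (k + 1) ⊆ (range b).filter P := by
      intro l hl
      rw [Finset.mem_range] at hl
      have := hd l k (by omega) h
      exact Finset.mem_filter.2 ⟨Finset.mem_range.2 (hb _ this), this⟩
    have := Finset.card_le_card this
    rw [Finset.card_range] at this
    omega

lemma filter_lt (b t : ℕ) (h : t ≤ b) : #((range b).filter (fun k => k < t)) = t := by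
  have : (range b).filter (fun k => k < t) = range t := by
    ext k; simp; omega
  rw [this, Finset.card_range]

/-- Membership with natural number coordinates. -/
def memN {a b c : ℕ} (s : Set (Fin a × Fin b × Fin c)) (q k p : ℕ) : Prop :=
  ∃ (hq : q < a) (hk : k < b) (hp : p < c),
    ((⟨q, hq⟩, ⟨k, hk⟩, ⟨p, hp⟩) : Fin a × Fin b × Fin c) ∈ s

lemma memN_down {a b c : ℕ} {s : Set (Fin a × Fin b × Fin c)} (hs : IsLowerSet s)
    {q k p q' k' p' : ℕ} (hq : q' ≤ q) (hk : k' ≤ k) (hp : p' ≤ p) (h : memN s q k p) :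
    memN s q' k' p' := by
  obtain ⟨h1, h2, h3, h4⟩ := h
  refine ⟨by omega, by omega, by omega, hs ?_ h4⟩
  exact ⟨hq, hk, hp⟩

/-- The top antidiagonal. -/
def topRow (a b c : ℕ) (i : Fin (c + a)) : ℕ := if (i : ℕ) < c then 0 else b

open Classical in
/-- The height function of a lower set. -/
noncomputable def ht {a b c : ℕ} (s : Set (Fin a × Fin b × Fin c)) (q p : ℕ) : ℕ :=
  #((range b).filter (fun k => memN s q k p))

lemma lt_ht {a b c : ℕ} {s : Set (Fin a × Fin b × Fin c)} (hs : IsLowerSet s) (q k p : ℕ) :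
    k < ht s q p ↔ memN s q k p := by
  classical
  unfold ht
  convert filter_down b (fun k => memN s q k p) (fun k h => h.2.1)
    (fun k l hkl h => memN_down hs le_rfl hkl le_rfl h) k

lemma ht_le {a b c : ℕ} (s : Set (Fin a × Fin b × Fin c)) (q p : ℕ) : ht s q p ≤ b := by
  classical
  unfold ht
  exact (Finset.card_filter_le _ _).trans (by simp)

lemma ht_anti {a b c : ℕ} {s : Set (Fin a × Fin b × Fin c)} (hs : IsLowerSet s)
    {q p q' p' : ℕ} (hq : q' ≤ q) (hp : p' ≤ p) : ht s q p ≤ ht s q' p' := by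
  by_contra h
  have h1 := (lt_ht hs q (ht s q' p') p).1 (by omega)
  have h2 := (lt_ht hs q' (ht s q' p') p').2 (memN_down hs hq le_rfl hp h1)
  omega

lemma ht_zero {a b c : ℕ} {s : Set (Fin a × Fin b × Fin c)} (hs : IsLowerSet s)
    {q p : ℕ} (hq : a ≤ q) : ht s q p = 0 := by
  by_contra h
  obtain ⟨h1, -⟩ := (lt_ht hs q 0 p).1 (by omega)
  omega

/-- Lower sets of the box are Gelfand-Tsetlin patterns. -/
noncomputable def boxEquiv (a b c : ℕ) :
    {s : Set (Fin a × Fin b × Fin c) // IsLowerSet s} ≃ {T // IsGT (c + a) (topRow a b c) T} where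
  toFun s := ⟨fun q i => if c + a ≤ q + i then 0 else if c ≤ i then b else ht s.1 q (c - 1 - i), by
    obtain ⟨s, hs⟩ := s
    refine ⟨?_, ?_, ?_⟩
    · intro q i h
      simp [h]
    · intro q i h
      simp only [topRow]
      rw [if_neg (by omega)]
      by_cases hi : c ≤ i
      · rw [if_pos hi, if_neg (by omega)]
      · rw [if_neg hi, if_pos (by omega), ht_zero hs (by omega)]
    · intro q i h
      simp only
      rw [if_neg (show ¬ c + a ≤ q + 1 + i by omega), if_neg (show ¬ c + a ≤ q + i by omega),
        if_neg (show ¬ c + a ≤ q + (i + 1) by omega)]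
      by_cases hi : c ≤ i
      · rw [if_pos hi, if_pos hi, if_pos (by omega)]
        exact ⟨le_rfl, le_rfl⟩
      · rw [if_neg hi, if_neg hi]
        refine ⟨ht_anti hs (by omega) le_rfl, ?_⟩
        split_ifs with h'
        · exact ht_le _ _ _
        · exact ht_anti hs le_rfl (by omega)⟩
  invFun T := ⟨{z | (z.2.1 : ℕ) < T.1 z.1 (c - 1 - z.2.2)}, by
    obtain ⟨T, hT⟩ := T
    rintro ⟨q, k, p⟩ ⟨q', k', p'⟩ ⟨hq, hk, hp⟩ h
    simp only [Set.mem_ofPred_eq, Fin.le_def] at h hq hk hp ⊢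
    have h1 := hT.anti (c - 1 - p) hq (by omega)
    have h2 := hT.mono q' (show c - 1 - (p : ℕ) ≤ c - 1 - (p' : ℕ) by omega) (by omega)
    omega⟩
  left_inv := by
    rintro ⟨s, hs⟩
    ext ⟨q, k, p⟩
    simp only [Set.mem_ofPred_eq]
    rw [if_neg (by omega), if_neg (by omega), lt_ht hs,
      show c - 1 - (c - 1 - (p : ℕ)) = p by omega]
    exact ⟨fun ⟨_, _, _, h⟩ => h, fun h => ⟨q.2, k.2, p.2, h⟩⟩
  right_inv := by
    classical
    rintro ⟨T, hT⟩
    ext q i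
    simp only
    by_cases h : c + a ≤ q + i
    · rw [if_pos h, hT.1 q i h]
    rw [if_neg h]
    have h1 := hT.mono q (show i ≤ c + a - 1 - q by omega) (by omega)
    have h2 := hT.2.1 q ⟨c + a - 1 - q, by omega⟩ (by simp only; omega)
    simp only [topRow] at h2
    rw [h2] at h1
    have hb : T q i ≤ b := by
      split_ifs at h1 <;> omega
    by_cases hi : c ≤ i
    · rw [if_pos hi]
      have h3 := hT.anti i (show q ≤ c + a - 1 - i by omega) (by omega)
      have h4 := hT.2.1 (c + a - 1 - i) ⟨i, by omega⟩ (by simp only; omega)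
      simp only [topRow] at h4
      rw [h4, if_neg (by omega)] at h3
      omega
    · rw [if_neg hi]
      by_cases hq : a ≤ q
      · rw [if_pos (by omega)] at h1
        unfold ht
        rw [Finset.card_eq_zero.2]
        · omega
        · refine Finset.filter_eq_empty_iff.2 ?_
          rintro k _ ⟨h', -⟩
          omega
      · unfold ht
        refine Eq.trans ?_ (filter_lt b (T q i) hb)
        congr 1
        ext k
        simp only [Finset.mem_filter, Finset.mem_range, memN, Set.mem_ofPred_eq]
        rw [show c - 1 - (c - 1 - i) = i by omega]
        constructor
        · rintro ⟨h, _, _, _, h'⟩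
          exact ⟨h, h'⟩
        · rintro ⟨h, h'⟩
          exact ⟨h, by omega, h, by omega, h'⟩

/-- The number of order ideals (lower sets) of the product of three chains
`Fin a × Fin b × Fin c` (componentwise order) is given multiplicatively by
MacMahon's product formula. -/
theorem card_lowerSets_box (a b c : ℕ) :
    Nat.card {s : Set (Fin a × Fin b × Fin c) // IsLowerSet s} *
      (∏ i ∈ Finset.range a, ∏ j ∈ Finset.range b, ∏ k ∈ Finset.range c,
        (i + j + k + 1)) =
    ∏ i ∈ Finset.range a, ∏ j ∈ Finset.range b, ∏ k ∈ Finset.range c,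
      (i + j + k + 2) := by
  have hm : Monotone (topRow a b c) := by
    intro i j hij
    rw [Fin.le_def] at hij
    simp only [topRow]
    split_ifs <;> omega
  have h1 := (card_gt (c + a) (topRow a b c) hm).2
  have h2 := bdet_top a b c
  simp only [topRow] at h1
  rw [← h1] at h2
  have h3 : Nat.card {s : Set (Fin a × Fin b × Fin c) // IsLowerSet s} *
      ∏ i ∈ range a, ∏ k ∈ range c, (i + k + 1) =
      ∏ i ∈ range a, ∏ k ∈ range c, (i + k + b + 1) := by
    rw [Nat.card_congr (boxEquiv a b c)]
    exact_mod_cast h2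
  have h4 := tele a b c
  have hpos : 0 < ∏ i ∈ range a, ∏ k ∈ range c, (i + k + b + 1) :=
    Finset.prod_pos fun i _ => Finset.prod_pos fun k _ => by omega
  apply Nat.eq_of_mul_eq_mul_right hpos
  rw [mul_assoc, h4, ← h3]
  ring
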